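/- arXiv:2406.12761 — 3 statements merged into one kernel-verified Lean document; each statement's English description precedes it below -/
import Mathlib

section
/- For all distinct positive integers n and m, and for all positive integers c and d, the polynomials n·X^(2c) − (2n+1)·X^c + n and m·X^(2d) − (2m+1)·X^d + m are coprime in ℚ[X] (i.e., they generate the unit ideal / have no common nonconstant factor). -/
open Polynomial

/-- `x` lies in `ℚ + ℚδ` and its inverse is its conjugate. -/
def TwistS (δ x : ℝ) : Prop := x ≠ 0 ∧ ∃ p q : ℚ, x = p + q * δ ∧ x⁻¹ = p - q * δ

lemma TwistS.mul {δ x y : ℝ} {r : ℚ} (hδ : δ ^ 2 = r) (hx : TwistS δ x) (hy : TwistS δ y) :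
    TwistS δ (x * y) := by
  obtain ⟨hx0, p, q, h1, h2⟩ := hx
  obtain ⟨hy0, p', q', h3, h4⟩ := hy
  refine ⟨mul_ne_zero hx0 hy0, p * p' + q * q' * r, p * q' + q * p', ?_, ?_⟩
  · rw [h1, h3]; push_cast; rw [← hδ]; ring
  · rw [mul_inv, h2, h4]; push_cast; rw [← hδ]; ring

lemma TwistS.inv {δ x : ℝ} (hx : TwistS δ x) : TwistS δ x⁻¹ := by
  obtain ⟨hx0, p, q, h1, h2⟩ := hx
  refine ⟨inv_ne_zero hx0, p, -q, ?_, ?_⟩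
  · rw [h2]; push_cast; ring
  · rw [inv_inv, h1]; push_cast; ring

lemma TwistS.pow {δ x : ℝ} {r : ℚ} (hδ : δ ^ 2 = r) (hx : TwistS δ x) (k : ℕ) :
    TwistS δ (x ^ k) := by
  induction k with
  | zero => exact ⟨by simp, 1, 0, by simp, by simp⟩
  | succ k ih => rw [pow_succ]; exact ih.mul hδ hx

lemma TwistS.zpow {δ x : ℝ} {r : ℚ} (hδ : δ ^ 2 = r) (hx : TwistS δ x) (k : ℤ) :
    TwistS δ (x ^ k) := by
  obtain ⟨n, rfl | rfl⟩ := k.eq_nat_or_neg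
  · rw [zpow_natCast]; exact hx.pow hδ n
  · rw [zpow_neg, zpow_natCast]; exact (hx.pow hδ n).inv

lemma TwistS.self {a : ℝ} {T : ℚ} (ha : a ≠ 0) (h : a + a⁻¹ = T) : TwistS (a - a⁻¹) a :=
  ⟨ha, T / 2, 1 / 2, by push_cast; rw [← h]; ring, by push_cast; rw [← h]; ring⟩

lemma twist_sq {a : ℝ} {T : ℚ} (ha : a ≠ 0) (h : a + a⁻¹ = T) :
    (a - a⁻¹) ^ 2 = ((T ^ 2 - 4 : ℚ) : ℝ) := by
  push_cast; rw [← h]; field_simp; ring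

/-- Rationality of the trace of the common generator. -/
lemma twist_rational {ρ : ℝ} (hρ : 1 < ρ) {c d : ℕ} (hc : 0 < c) (hd : 0 < d) {T U : ℚ}
    (h1 : ρ ^ c + (ρ ^ c)⁻¹ = T) (h2 : ρ ^ d + (ρ ^ d)⁻¹ = U) :
    ∃ s : ℚ, ρ ^ (Nat.gcd c d) + (ρ ^ (Nat.gcd c d))⁻¹ = s := by
  have hρ0 : ρ ≠ 0 := by positivity
  have ha0 : ρ ^ c ≠ 0 := by positivity
  have hb0 : ρ ^ d ≠ 0 := by positivity
  have hδ := twist_sq ha0 h1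
  have hε := twist_sq hb0 h2
  have ha := TwistS.self ha0 h1
  have hb : TwistS (ρ ^ c - (ρ ^ c)⁻¹) (ρ ^ d) := by
    obtain ⟨-, p, q, e1, e2⟩ := ha.pow hδ d
    obtain ⟨-, p', q', e3, e4⟩ := (TwistS.self hb0 h2).pow hε c
    have hcomm : (ρ ^ c) ^ d = (ρ ^ d) ^ c := by rw [← pow_mul, ← pow_mul, mul_comm]
    have hgt : 1 < (ρ ^ d) ^ c := one_lt_pow₀ (one_lt_pow₀ hρ hd.ne') hc.ne'
    have hlt : ((ρ ^ d) ^ c)⁻¹ < 1 := inv_lt_one_of_one_lt₀ hgt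
    rw [hcomm] at e1 e2
    have hq' : (q' : ℝ) ≠ 0 := by
      intro h0
      rw [h0] at e3 e4
      linarith
    have key : ρ ^ d - (ρ ^ d)⁻¹ = (q / q') * (ρ ^ c - (ρ ^ c)⁻¹) := by
      have : (q' : ℝ) * (ρ ^ d - (ρ ^ d)⁻¹) = q * (ρ ^ c - (ρ ^ c)⁻¹) := by linarith
      rw [div_mul_eq_mul_div, eq_div_iff hq', ← this]; ring
    refine ⟨hb0, U / 2, q / q' / 2, ?_, ?_⟩
    · push_cast; linarith
    · push_cast; linarith
  have hg : TwistS (ρ ^ c - (ρ ^ c)⁻¹) (ρ ^ (Nat.gcd c d)) := by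
    have : ρ ^ (Nat.gcd c d) = (ρ ^ c) ^ (Nat.gcdA c d) * (ρ ^ d) ^ (Nat.gcdB c d) := by
      rw [← zpow_natCast, Nat.gcd_eq_gcd_ab, zpow_add₀ hρ0, zpow_mul, zpow_mul,
        zpow_natCast, zpow_natCast]
    rw [this]
    exact (ha.zpow hδ _).mul hδ (hb.zpow hδ _)
  obtain ⟨-, p, q, e1, e2⟩ := hg
  exact ⟨2 * p, by push_cast; linarith⟩

lemma twist_rec {g : ℝ} (hg : g ≠ 0) {p q : ℤ} (h : q * (g + g⁻¹) = p) (k : ℕ) :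
    ∃ V V' : ℤ, (q : ℝ) ^ (k + 1) * (g ^ (k + 1) + (g ^ (k + 1))⁻¹ - 2) = (p - 2 * q) * V ∧
      (q : ℝ) ^ (k + 2) * (g ^ (k + 2) + (g ^ (k + 2))⁻¹ - 2) = (p - 2 * q) * V' ∧
      q ∣ V - p ^ k ∧ q ∣ V' - p ^ (k + 1) := by
  induction k with
  | zero =>
    refine ⟨1, p + 2 * q, ?_, ?_, by simp, ⟨2, by ring⟩⟩
    · push_cast; rw [← h]; simp; ring
    · push_cast; rw [← h]; field_simp; ring
  | succ k ih =>
    obtain ⟨V, V', e1, e2, ⟨x, hx⟩, y, hy⟩ := ih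
    refine ⟨V', p * V' - q ^ 2 * V + 2 * q ^ (k + 2), e2, ?_, ⟨y, hy⟩,
      ⟨p * y - q * V + 2 * q ^ (k + 1), ?_⟩⟩
    · have : (q : ℝ) ^ (k + 1 + 2) * (g ^ (k + 1 + 2) + (g ^ (k + 1 + 2))⁻¹ - 2) =
          q * (g + g⁻¹) * ((q : ℝ) ^ (k + 2) * (g ^ (k + 2) + (g ^ (k + 2))⁻¹ - 2))
          - q ^ 2 * ((q : ℝ) ^ (k + 1) * (g ^ (k + 1) + (g ^ (k + 1))⁻¹ - 2))
          + 2 * q ^ (k + 2) * (q * (g + g⁻¹) - 2 * q) := by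
        field_simp; ring
      rw [this, e1, e2, h]; push_cast; ring
    · linear_combination p * hy

lemma twist_pos {g : ℝ} (hg : 1 < g) : 0 < g + g⁻¹ - 2 := by
  have : g + g⁻¹ - 2 = (g - 1) ^ 2 / g := by field_simp; ring
  rw [this]
  have : 0 < g - 1 := by linarith
  positivity

lemma twist_mono {g h : ℝ} (hg : 1 < g) (hh : g < h) : g + g⁻¹ < h + h⁻¹ := by
  have hg0 : 0 < g := by linarith
  have hh0 : 0 < h := by linarith
  have : h + h⁻¹ - (g + g⁻¹) = (h - g) * (g * h - 1) / (g * h) := by field_simp; ring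
  have h1 : 0 < h - g := by linarith
  have h2 : 0 < g * h - 1 := by nlinarith
  have : 0 < (h - g) * (g * h - 1) / (g * h) := by positivity
  linarith

lemma twist_one {g : ℝ} (hg : 1 < g) {s : ℚ} (hs : g + g⁻¹ = s) {n k : ℕ} (hn : 0 < n)
    (h : g ^ (k + 1) + (g ^ (k + 1))⁻¹ = 2 + 1 / (n : ℝ)) : k = 0 := by
  have hg0 : g ≠ 0 := by positivity
  have hnR : (0 : ℝ) < n := by exact_mod_cast hn
  obtain ⟨p, q, hq, hcop, hsq⟩ : ∃ p q : ℤ, 0 < q ∧ IsCoprime p q ∧ (q : ℝ) * s = p := by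
    refine ⟨s.num, s.den, by exact_mod_cast s.pos, ?_, ?_⟩
    · rw [Int.isCoprime_iff_gcd_eq_one]; exact s.reduced
    · have := Rat.den_mul_eq_num s
      exact_mod_cast this
  have hqR : (0 : ℝ) < q := by exact_mod_cast hq
  rw [← hs] at hsq
  obtain ⟨V, -, e, -, hV, -⟩ := twist_rec hg0 hsq k
  rw [h] at e
  have e' : (q : ℝ) ^ (k + 1) = (p - 2 * q) * V * n := by
    rw [← e]; field_simp; ring
  have eZ : q ^ (k + 1) = (p - 2 * q) * V * n := by exact_mod_cast e'
  have hcop1 : IsCoprime (p - 2 * q) q := by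
    have := hcop.add_mul_left_left (-2)
    rwa [show p + q * (-2) = p - 2 * q by ring] at this
  have hcop2 : IsCoprime V q := by
    obtain ⟨x, hx⟩ := hV
    have := (hcop.pow_left (m := k)).add_mul_left_left x
    rwa [show p ^ k + q * x = V by linear_combination -hx] at this
  have hu : IsUnit ((p - 2 * q) * V) :=
    ((hcop1.mul_left hcop2).pow_right (n := k + 1)).isUnit_of_dvd' dvd_rfl ⟨n, eZ⟩
  have hu1 : IsUnit (p - 2 * q) := isUnit_of_mul_isUnit_left hu
  have hpq : (p : ℝ) - 2 * q = q * (g + g⁻¹ - 2) := by rw [← hsq]; ring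
  have hposR : (0 : ℝ) < p - 2 * q := by rw [hpq]; exact mul_pos hqR (twist_pos hg)
  have hpos : 0 < p - 2 * q := by exact_mod_cast hposR
  have h1 : p - 2 * q = 1 := by
    rcases Int.isUnit_iff.mp hu1 with h | h <;> omega
  have h1R : (p : ℝ) - 2 * q = 1 := by exact_mod_cast h1
  have hqn : q ^ (k + 1) = n := by
    rcases Int.isUnit_iff.mp hu with h | h
    · rw [eZ, h, one_mul]
    · rw [h] at eZ
      have : 0 < q ^ (k + 1) := by positivity
      omega
  have hqnR : (q : ℝ) ^ (k + 1) = n := by exact_mod_cast hqn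
  by_contra hk
  have hlt : g < g ^ (k + 1) := by
    have := pow_lt_pow_right₀ hg (show 1 < k + 1 by omega)
    simpa using this
  have hm := twist_mono hg hlt
  rw [h] at hm
  have hq1 : (1 : ℝ) ≤ q := by exact_mod_cast hq
  have hle : (q : ℝ) ≤ n := by
    rw [← hqnR]; exact le_self_pow₀ hq1 (by omega)
  have h3 : g + g⁻¹ - 2 = 1 / q := by
    rw [eq_div_iff hqR.ne', mul_comm, ← hpq, h1R]
  have h4 : 1 / (n : ℝ) ≤ 1 / q := one_div_le_one_div_of_le hqR hle
  linarith

lemma twist_main {ρ : ℝ} (hρ : 1 < ρ) {n m c d : ℕ} (hn : 0 < n) (hm : 0 < m)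
    (hc : 0 < c) (hd : 0 < d)
    (h1 : ρ ^ c + (ρ ^ c)⁻¹ = 2 + 1 / (n : ℝ)) (h2 : ρ ^ d + (ρ ^ d)⁻¹ = 2 + 1 / (m : ℝ)) :
    n = m := by
  obtain ⟨s, hs⟩ := twist_rational hρ hc hd (T := 2 + 1 / n) (U := 2 + 1 / m)
    (by rw [h1]; push_cast; rfl) (by rw [h2]; push_cast; rfl)
  have he : 0 < Nat.gcd c d := Nat.gcd_pos_of_pos_left _ hc
  have hg : 1 < ρ ^ (Nat.gcd c d) := one_lt_pow₀ hρ he.ne'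
  have aux : ∀ {x N : ℕ}, 0 < N → 0 < x → Nat.gcd c d ∣ x →
      ρ ^ x + (ρ ^ x)⁻¹ = 2 + 1 / (N : ℝ) → x = Nat.gcd c d := by
    intro x N hN hx ⟨y, hy⟩ h
    obtain ⟨k, rfl⟩ : ∃ k, y = k + 1 := ⟨y - 1, by
      have : y ≠ 0 := by rintro rfl; simp at hy; omega
      omega⟩
    rw [hy, pow_mul] at h
    have := twist_one hg hs hN h
    rw [hy, this]; simp
  have hc' := aux hn hc (Nat.gcd_dvd_left c d) h1
  have hd' := aux hm hd (Nat.gcd_dvd_right c d) h2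
  rw [hc'] at h1
  rw [hd'] at h2
  have h3 : 1 / (n : ℝ) = 1 / m := by linarith
  simpa using h3

/-- A complex root gives a positive real root: its absolute value. -/
lemma twist_abs {w : ℂ} {n : ℕ} (hn : 0 < n)
    (h : (n : ℂ) * w ^ 2 - (2 * n + 1) * w + n = 0) :
    ‖w‖ ≠ 0 ∧ ‖w‖ ≠ 1 ∧ ‖w‖ + ‖w‖⁻¹ = 2 + 1 / (n : ℝ) := by
  have hnR : (0 : ℝ) < n := by exact_mod_cast hn
  have hre := congrArg Complex.re h
  have him := congrArg Complex.im h
  simp [pow_two] at hre him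
  have hi : w.im * (2 * n * w.re - (2 * n + 1)) = 0 := by linarith
  have hw : w.im = 0 := by
    rcases mul_eq_zero.mp hi with h0 | h0
    · exact h0
    · exfalso
      have hx : 1 < w.re := by
        by_contra hle
        push Not at hle
        nlinarith
      have e1 : (n : ℝ) * (w.im * w.im) = n - n * (w.re * w.re) := by
        linear_combination w.re * h0 - hre
      have e2 : (n : ℝ) * (w.re * w.re) > n * 1 := by
        apply mul_lt_mul_of_pos_left _ hnR
        nlinarith
      have e3 : 0 ≤ (n : ℝ) * (w.im * w.im) := mul_nonneg hnR.le (mul_self_nonneg _)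
      linarith
  have hwx : w = (w.re : ℂ) := by
    apply Complex.ext <;> simp [hw]
  have hx : (n : ℝ) * w.re ^ 2 - (2 * n + 1) * w.re + n = 0 := by
    rw [hw] at hre; linear_combination hre
  have hx0 : 0 < w.re := by
    by_contra hle
    push Not at hle
    have : 0 ≤ (n : ℝ) * w.re ^ 2 := by positivity
    nlinarith
  have hnorm : ‖w‖ = w.re := by
    rw [hwx, Complex.norm_real, Real.norm_of_nonneg hx0.le, Complex.ofReal_re]
  rw [hnorm]
  refine ⟨hx0.ne', ?_, ?_⟩
  · intro h1
    rw [h1] at hx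
    linarith
  · field_simp
    linear_combination hx

/-- For all distinct positive integers `n` and `m`, and all positive integers `c` and `d`,
the polynomials `n·X^(2c) − (2n+1)·X^c + n` and `m·X^(2d) − (2m+1)·X^d + m` are coprime
in `ℚ[X]`. -/
theorem twist_knot_alexander_strongly_coprime
    (n m c d : ℕ) (hn : 0 < n) (hm : 0 < m) (hnm : n ≠ m) (hc : 0 < c) (hd : 0 < d) :
    IsCoprime (C (n : ℚ) * X ^ (2 * c) - C (2 * n + 1 : ℚ) * X ^ c + C (n : ℚ))
      (C (m : ℚ) * X ^ (2 * d) - C (2 * m + 1 : ℚ) * X ^ d + C (m : ℚ)) := by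
  rw [Polynomial.isCoprime_iff_aeval_ne_zero_of_isAlgClosed ℚ ℂ]
  intro z
  by_contra! hz
  obtain ⟨h1, h2⟩ := hz
  have h1' : (n : ℂ) * (z ^ c) ^ 2 - (2 * n + 1) * z ^ c + n = 0 := by
    rw [← pow_mul, mul_comm c 2]
    simpa using h1
  have h2' : (m : ℂ) * (z ^ d) ^ 2 - (2 * m + 1) * z ^ d + m = 0 := by
    rw [← pow_mul, mul_comm d 2]
    simpa using h2
  obtain ⟨a0, a1, a2⟩ := twist_abs hn h1'
  obtain ⟨-, -, b2⟩ := twist_abs hm h2'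
  rw [norm_pow] at a0 a1 a2 b2
  have hz0 : 0 < ‖z‖ := by
    rcases (norm_nonneg z).lt_or_eq with h | h
    · exact h
    · rw [← h, zero_pow hc.ne'] at a0
      exact absurd rfl a0
  rcases lt_trichotomy ‖z‖ 1 with h | h | h
  · refine hnm (twist_main (ρ := ‖z‖⁻¹) ((one_lt_inv₀ hz0).mpr h) hn hm hc hd ?_ ?_)
    · rw [inv_pow, inv_inv, add_comm]; exact a2
    · rw [inv_pow, inv_inv, add_comm]; exact b2
  · rw [h, one_pow] at a1
    exact a1 rfl
  · exact hnm (twist_main h hn hm hc hd a2 b2)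
end

section
/- Let n be a positive integer such that there is no integer m with n = m·(m−1) and there are no integers m, k with k ≥ 2 and n = m^k. Then for every positive integer c the polynomial n·X^(2c) − (2n+1)·X^c + n is irreducible in ℚ[X]. -/
open Polynomial
lemma kummer_real {F : Type*} [Field F] (i : F →+* ℝ) (a : F) (ha : 0 < i a) (c : ℕ) (hc : 0 < c)
    (H : ∀ (b : F) (k : ℕ), 2 ≤ k → b ^ k ≠ a) : Irreducible (X ^ c - C a : F[X]) := by
  have hm : (X ^ c - C a : F[X]).Monic := monic_X_pow_sub_C a hc.ne'
  have hdeg : (X ^ c - C a : F[X]).natDegree = c := natDegree_X_pow_sub_C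
  have h1 : (X ^ c - C a : F[X]) ≠ 1 := by
    intro h
    rw [h, natDegree_one] at hdeg
    omega
  rw [hm.irreducible_iff_lt_natDegree_lt h1]
  intro q hq hd hdvd
  rw [hdeg, Finset.mem_Ioc] at hd
  obtain ⟨d, hdq⟩ : ∃ d, d = q.natDegree := ⟨_, rfl⟩
  rw [← hdq] at hd
  have key : |i (q.coeff 0)| ^ c = i a ^ d := by
    let j : F →+* ℂ := Complex.ofRealHom.comp i
    have hs : (q.map j).Splits := IsAlgClosed.splits _
    have e1 := hs.coeff_zero_eq_prod_roots_of_monic (hq.map j)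
    have hcard : (q.map j).roots.card = d := by
      rw [← hs.natDegree_eq_card_roots, natDegree_map, hdq]
    have hr : ∀ z ∈ (q.map j).roots, ‖z‖ ^ c = i a := by
      intro z hz
      have hz' := isRoot_of_mem_roots hz
      have hz2 : ((X ^ c - C a : F[X]).map j).IsRoot z := hz'.dvd (Polynomial.map_dvd j hdvd)
      have : z ^ c = j a := by simpa [sub_eq_zero] using hz2
      rw [← norm_pow, this]
      simp [j, abs_of_pos ha]
    have e2 : |i (q.coeff 0)| = ‖(q.map j).roots.prod‖ := by
      have := congrArg norm e1
      simpa [j] using this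
    have e3 : ∀ s : Multiset ℂ, (∀ z ∈ s, ‖z‖ ^ c = i a) → ‖s.prod‖ ^ c = i a ^ s.card := by
      intro s
      induction s using Multiset.induction_on with
      | empty => simp
      | cons z s ih =>
        intro h
        rw [Multiset.prod_cons, norm_mul, mul_pow, h z (by simp),
          ih (fun w hw => h w (by simp [hw])), Multiset.card_cons]
        ring
    rw [e2, e3 _ hr, hcard]
  obtain ⟨z, hz0, hz⟩ : ∃ z : F, 0 ≤ i z ∧ i z ^ c = i a ^ d := by
    rcases le_total 0 (i (q.coeff 0)) with h | h
    · exact ⟨_, h, by rwa [abs_of_nonneg h] at key⟩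
    · exact ⟨-q.coeff 0, by simpa using h, by rw [abs_of_nonpos h] at key; simpa using key⟩
  have hzpos : 0 < i z := by
    rcases hz0.lt_or_eq with h | h
    · exact h
    · rw [← h, zero_pow hc.ne'] at hz
      exact absurd hz (pow_pos ha d).ne
  obtain ⟨g, c', d', hg, hcop, hc', hd'⟩ := Nat.exists_coprime' (m := c) (n := d)
    (Nat.gcd_pos_of_pos_left _ hc)
  have e : z ^ c' = a ^ d' := by
    apply i.injective
    rw [map_pow, map_pow]
    rw [hc', hd', pow_mul, pow_mul] at hz
    exact (pow_left_inj₀ (by positivity) (by positivity) hg.ne').1 hz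
  have hb := Nat.gcd_eq_gcd_ab c' d'
  rw [hcop.gcd_eq_one] at hb
  have hz' : z ≠ 0 := by rintro rfl; simp at hzpos
  have ha' : a ≠ 0 := by rintro rfl; simp at ha
  refine H (a ^ (c'.gcdA d') * z ^ (c'.gcdB d')) c' ?_ ?_
  · by_contra hlt
    have : c' = 0 ∨ c' = 1 := by omega
    rcases this with rfl | rfl
    · omega
    · have : 0 < d' := Nat.pos_of_ne_zero (by rintro rfl; omega)
      have : c ≤ d := by rw [hc', hd']; exact Nat.mul_le_mul_right _ this
      omega
  · calc _ = a ^ (c' * c'.gcdA d' : ℤ) * (z ^ c') ^ (c'.gcdB d') := by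
          rw [mul_pow]
          congr 1
          · rw [mul_comm, zpow_mul, zpow_natCast]
          · rw [← zpow_natCast, ← zpow_mul, ← zpow_natCast, ← zpow_mul, mul_comm]
      _ = a ^ (c' * c'.gcdA d' + d' * c'.gcdB d' : ℤ) := by
          rw [e, zpow_add₀ ha', ← zpow_natCast a d', ← zpow_mul a d']
      _ = a := by rw [← hb]; simp

/-- arithmetic core -/
lemma dickson_arith (n : ℕ) (hn : 0 < n) (a e : ℚ) (T : ℕ → ℚ) (h0 : T 0 = 2) (h1 : T 1 = a)
    (hT : ∀ k, T (k + 2) = a * T (k + 1) - e * T k) (k : ℕ) (hk : 2 ≤ k) (he : e ^ k = 1)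
    (hTk : T k = 2 + 1 / n) : ∃ m : ℤ, (n : ℤ) = m ^ k := by
  obtain ⟨ε, hε⟩ : ∃ ε : ℤ, e = ε := by
    have : |e| = 1 := by
      have : |e| ^ k = 1 := by rw [← abs_pow, he, abs_one]
      exact (pow_eq_one_iff_of_nonneg (abs_nonneg e) (by omega)).1 this
    rcases abs_eq (zero_le_one' ℚ) |>.1 this with h | h
    · exact ⟨1, by simp [h]⟩
    · exact ⟨-1, by simp [h]⟩
  subst hε
  set u : ℤ := a.num
  set v : ℤ := (a.den : ℤ) with hv
  have hv0 : (v : ℚ) ≠ 0 := by simp [hv]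
  have hvpos : 0 < v := by simp [hv, a.pos]
  have hau : a * v = u := by
    rw [hv, Int.cast_natCast]
    exact Rat.mul_den_eq_num a
  have hcop : IsCoprime u v := by
    have := a.reduced
    rw [Int.isCoprime_iff_gcd_eq_one]
    simpa [Int.gcd, u, v] using this
  have main : ∀ j : ℕ, (∃ w w' : ℤ, (w : ℚ) = T (j+1) * v ^ (j+1) ∧ w = u ^ (j+1) + v * w') ∧
      (∃ w w' : ℤ, (w : ℚ) = T (j+2) * v ^ (j+2) ∧ w = u ^ (j+2) + v * w') := by
    intro j
    induction j with
    | zero =>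
      refine ⟨⟨u, 0, by simp [h1, hau], by simp⟩, ⟨u^2 - 2 * ε * v^2, -2 * ε * v, ?_, by ring⟩⟩
      push_cast
      rw [hT 0, h0, zero_add, h1, ← hau]
      ring
    | succ j ih =>
      refine ⟨ih.2, ?_⟩
      obtain ⟨⟨w, w', hw, hw'⟩, ⟨x, x', hx, hx'⟩⟩ := ih
      refine ⟨u * x - ε * v ^ 2 * w, u * x' - ε * v * w, ?_, ?_⟩
      · push_cast
        rw [hw, hx, ← hau, hT (j+1)]
        ring
      · rw [hx']; ring
  obtain ⟨j, rfl⟩ : ∃ j, k = j + 2 := ⟨k - 2, by omega⟩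
  obtain ⟨-, w, w', hw, hw'⟩ := main j
  have hcw : IsCoprime w (v ^ (j+2)) := by
    apply IsCoprime.pow_right
    rw [hw']
    exact (IsCoprime.pow_left hcop).add_mul_left_left w'
  have hnq : (n : ℚ) ≠ 0 := by positivity
  have heq : (n : ℤ) * w = (2 * n + 1) * v ^ (j+2) := by
    have : (n : ℚ) * w = (2 * n + 1) * v ^ (j+2) := by
      rw [hw, hTk]; field_simp
    exact_mod_cast this
  refine ⟨v, ?_⟩
  apply Int.dvd_antisymm (by positivity) (by positivity)
  · have : IsCoprime (n : ℤ) (2 * n + 1) := ⟨-2, 1, by ring⟩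
    exact this.dvd_of_dvd_mul_left (Dvd.intro _ heq)
  · exact hcw.symm.dvd_of_dvd_mul_right (Dvd.intro_left _ heq.symm)

lemma quad_rel {L : Type*} [Field L] [Algebra ℚ L] (h : Module.finrank ℚ L = 2) (b : L) :
    b ^ 2 = Algebra.trace ℚ L b • b - Algebra.norm ℚ b • 1 := by
  have : FiniteDimensional ℚ L := FiniteDimensional.of_finrank_pos (by omega)
  let B := Module.finBasisOfFinrankEq ℚ L h
  apply Algebra.leftMulMatrix_injective B
  have := Matrix.aeval_self_charpoly (Algebra.leftMulMatrix B b)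
  rw [Matrix.charpoly_fin_two, ← Algebra.trace_eq_matrix_trace, ← Algebra.norm_eq_matrix_det] at this
  simp only [map_add, map_sub, map_mul, map_pow, aeval_X, aeval_C, map_smul, map_one,
    Algebra.algebraMap_eq_smul_one, smul_mul_assoc, one_mul] at this ⊢
  rw [← sub_eq_zero, ← this]
  abel

lemma not_pow {L : Type*} [Field L] [Algebra ℚ L] (h : Module.finrank ℚ L = 2) (n : ℕ) (hn : 0 < n)
    (x : L) (ht : Algebra.trace ℚ L x = 2 + 1 / n) (hN : Algebra.norm ℚ x = 1)
    (b : L) (k : ℕ) (hk : 2 ≤ k) (hb : b ^ k = x) : ∃ m : ℤ, (n : ℤ) = m ^ k := by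
  refine dickson_arith n hn (Algebra.trace ℚ L b) (Algebra.norm ℚ b)
    (fun j => Algebra.trace ℚ L (b ^ j)) ?_ ?_ ?_ k hk ?_ ?_
  · have := Algebra.trace_algebraMap (R := ℚ) (S := L) 1
    simpa [h] using this
  · simp
  · intro j
    have : b ^ (j + 2) = Algebra.trace ℚ L b • b ^ (j+1) - Algebra.norm ℚ b • b ^ j := by
      rw [pow_add, quad_rel h, mul_sub, mul_smul_comm, mul_smul_comm, mul_one, ← pow_succ]
    simp only [this, map_sub, map_smul, smul_eq_mul]
  · rw [← map_pow, hb, hN]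
  · simp only [hb, ht]

lemma comp_irred {K : Type} [Field K] {f : K[X]} (hfm : f.Monic) (hf : Irreducible f) (c : ℕ)
    (H : ∀ (L : Type) [Field L] [Algebra K L] (pb : PowerBasis K L), minpoly K pb.gen = f →
      Irreducible (X ^ c - C pb.gen : L[X])) : Irreducible (f.comp (X ^ c)) := by
  apply irreducible_comp hfm (monic_X_pow c) hf
  intro E _ _ x hx
  have hint : IsIntegral K x := by
    by_contra h
    rw [minpoly.eq_zero h] at hx
    exact hfm.ne_zero hx.symm
  have hgen := IntermediateField.adjoin.powerBasis_gen hint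
  rw [Polynomial.map_pow, map_X, ← hgen]
  apply H
  rw [hgen, IntermediateField.minpoly_gen, hx]

theorem twist_knot_alexander_strongly_irreducible
    (n : ℕ) (hn : 0 < n)
    (h1 : ∀ m : ℤ, (n : ℤ) ≠ m * (m - 1))
    (h2 : ∀ (m : ℤ) (k : ℕ), 2 ≤ k → (n : ℤ) ≠ m ^ k) :
    ∀ c : ℕ, 0 < c →
      Irreducible (C (n : ℚ) * X ^ (2 * c) - C (2 * n + 1 : ℚ) * X ^ c + C (n : ℚ)) := by
  intro c hc
  have hnq : (n : ℚ) ≠ 0 := by positivity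
  let f : ℚ[X] := X ^ 2 - C (2 + 1 / n : ℚ) * X + 1
  have hfd : f.natDegree = 2 := by simp only [f]; compute_degree!
  have hfm : f.Monic := by simp only [f]; monicity!
  have hf : Irreducible f := by
    rw [hfm.irreducible_iff_roots_eq_zero_of_degree_le_three (by omega) (by omega)]
    rw [Multiset.eq_zero_iff_forall_notMem]
    intro q hq
    have hq := isRoot_of_mem_roots hq
    have hq : q ^ 2 - (2 + 1 / n) * q + 1 = 0 := by simpa [f] using hq
    have hsq : IsSquare (((4 * n + 1 : ℤ)) : ℚ) := by
      refine ⟨2 * n * q - (2 * n + 1), ?_⟩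
      field_simp at hq
      push_cast
      linear_combination (-4 * (n : ℚ)) * hq
    rw [Rat.isSquare_intCast_iff] at hsq
    obtain ⟨s, hs⟩ := hsq
    rcases Int.even_or_odd' s with ⟨m, rfl | rfl⟩
    · have : 4 * (m * m - n) = 1 := by linear_combination -hs
      omega
    · exact h1 (m + 1) (by linarith)
  have hcomp : Irreducible (f.comp (X ^ c)) := by
    refine comp_irred hfm hf c ?_
    intro L _ _ pb hmin
    have hα : ∃ α : ℝ, 0 < α ∧ aeval α (minpoly ℚ pb.gen) = 0 := by
      refine ⟨(2 * n + 1 + √(4 * n + 1)) / (2 * n), by positivity, ?_⟩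
      have hs : √(4 * n + 1 : ℝ) ^ 2 = 4 * n + 1 := Real.sq_sqrt (by positivity)
      have hnr : (n : ℝ) ≠ 0 := by positivity
      rw [hmin]
      simp only [f, map_add, map_sub, map_mul, map_pow, aeval_X, aeval_C, map_one]
      simp only [eq_ratCast]
      push_cast
      generalize √(4 * n + 1 : ℝ) = s at hs ⊢
      field_simp
      linear_combination hs
    obtain ⟨α, hα, hα'⟩ := hα
    refine kummer_real (pb.lift α hα').toRingHom _ ?_ c hc ?_
    · have := pb.lift_gen α hα'
      simpa [this] using hα
    · intro b k hk hb
      obtain ⟨m, hm⟩ := not_pow (L := L)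
        (by rw [pb.finrank, ← pb.natDegree_minpoly, hmin, hfd]) n hn pb.gen
        (by
          rw [PowerBasis.trace_gen_eq_nextCoeff_minpoly, hmin,
            nextCoeff_of_natDegree_pos (by omega), hfd]
          simp [f, coeff_one]) 
        (by
          rw [Algebra.PowerBasis.norm_gen_eq_coeff_zero_minpoly, hmin, ← PowerBasis.natDegree_minpoly, hmin, hfd]
          simp [f]) b k hk hb
      exact h2 m k hk hm
  have : C (n : ℚ) * X ^ (2 * c) - C (2 * n + 1 : ℚ) * X ^ c + C (n : ℚ)
      = C (n : ℚ) * f.comp (X ^ c) := by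
    have : C (2 * n + 1 : ℚ) = C (n : ℚ) * C (2 + 1 / n : ℚ) := by
      rw [← C_mul]; congr 1; field_simp
    rw [this]
    simp only [f, sub_comp, add_comp, mul_comp, pow_comp, X_comp, C_comp, one_comp]
    ring
  rw [this]
  exact (irreducible_isUnit_mul (isUnit_C.2 (IsUnit.mk0 _ hnq))).2 hcomp
end

section
/- There are infinitely many positive integers n with the following three properties: (i) there exist positive integers a, b with n = a² − a + b²; (ii) there is no integer m with n = m² − m; (iii) there are no natural numbers m, k with k ≥ 2 and n = m^k. In fact, n = 36k² − 6k + 4 has all three properties for every odd positive integer k. -/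
theorem twist_aux (k : ℕ) (hk : Odd k) :
    (0 < 36 * k ^ 2 - 6 * k + 4 ∧
      (∃ a b : ℕ, 0 < a ∧ 0 < b ∧ 36 * k ^ 2 - 6 * k + 4 = a ^ 2 - a + b ^ 2) ∧
      (∀ m : ℤ, ((36 * k ^ 2 - 6 * k + 4 : ℕ) : ℤ) ≠ m ^ 2 - m) ∧
      (∀ m j : ℕ, 2 ≤ j → 36 * k ^ 2 - 6 * k + 4 ≠ m ^ j)) := by
  obtain ⟨i, rfl⟩ := hk
  have hn : 36 * (2 * i + 1) ^ 2 - 6 * (2 * i + 1) + 4 = 144 * i ^ 2 + 132 * i + 34 := by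
    have : 36 * (2 * i + 1) ^ 2 = 144 * i ^ 2 + 144 * i + 36 := by ring
    omega
  refine ⟨by omega, ⟨6 * (2 * i + 1), 2, by omega, by omega, ?_⟩, ?_, ?_⟩
  · rw [mul_pow]
    norm_num
  · intro m h
    rw [hn] at h
    push_cast at h
    obtain ⟨q, hq | hq | hq⟩ : ∃ q : ℤ, m = 3 * q ∨ m = 3 * q + 1 ∨ m = 3 * q + 2 :=
      ⟨m / 3, by omega⟩
    all_goals
      subst hq
      ring_nf at h
      omega
  · intro m j hj h
    rw [hn] at h
    rcases Nat.even_or_odd m with hm | hm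
    · have h2 : 2 ^ 2 ∣ m ^ j :=
        (pow_dvd_pow_of_dvd hm.two_dvd 2).trans (pow_dvd_pow m hj)
      rw [← h] at h2
      omega
    · have h2 : Odd (m ^ j) := hm.pow
      rw [← h] at h2
      obtain ⟨r, hr⟩ := h2
      omega

/-- There are infinitely many positive integers `n` such that: (i) `n = a² − a + b²` for
some positive integers `a`, `b`; (ii) `n` is not of the form `m² − m` for an integer `m`;
(iii) `n` is not a perfect power `m^j` with `j ≥ 2`. In fact, `n = 36k² − 6k + 4`
satisfies all three properties for every odd positive integer `k`. -/
theorem infinitely_many_order_two_twist_knot_parameters :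
    {n : ℕ | 0 < n ∧
        (∃ a b : ℕ, 0 < a ∧ 0 < b ∧ n = a ^ 2 - a + b ^ 2) ∧
        (∀ m : ℤ, (n : ℤ) ≠ m ^ 2 - m) ∧
        (∀ m j : ℕ, 2 ≤ j → n ≠ m ^ j)}.Infinite ∧
      ∀ k : ℕ, Odd k → 0 < k →
        (0 < 36 * k ^ 2 - 6 * k + 4 ∧
          (∃ a b : ℕ, 0 < a ∧ 0 < b ∧ 36 * k ^ 2 - 6 * k + 4 = a ^ 2 - a + b ^ 2) ∧
          (∀ m : ℤ, ((36 * k ^ 2 - 6 * k + 4 : ℕ) : ℤ) ≠ m ^ 2 - m) ∧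
          (∀ m j : ℕ, 2 ≤ j → 36 * k ^ 2 - 6 * k + 4 ≠ m ^ j)) := by
  refine ⟨?_, fun k hk _ => twist_aux k hk⟩
  refine Set.infinite_of_injective_forall_mem
    (f := fun i : ℕ => 36 * (2 * i + 1) ^ 2 - 6 * (2 * i + 1) + 4) ?_
    (fun i => twist_aux (2 * i + 1) ⟨i, rfl⟩)
  refine StrictMono.injective (strictMono_nat_of_lt_succ fun i => ?_)
  have h1 : 36 * (2 * i + 1) ^ 2 = 144 * i ^ 2 + 144 * i + 36 := by ring
  have h2 : 36 * (2 * (i + 1) + 1) ^ 2 = 144 * i ^ 2 + 432 * i + 324 := by ring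
  show 36 * (2 * i + 1) ^ 2 - 6 * (2 * i + 1) + 4
    < 36 * (2 * (i + 1) + 1) ^ 2 - 6 * (2 * (i + 1) + 1) + 4
  omega
end
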